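/- Let 𝒳 be a measurable space equipped with a probability measure μ (the law of the input X), let 𝒴 be a finite type, and let q : 𝒳 → (𝒴 → ℝ) be a fixed and known conditional probability distribution p_{Y|X}, i.e. q x is a pmf on 𝒴 for every x ∈ 𝒳 and x ↦ q x y is measurable for each y. Let H(Y) = H(y ↦ ∫ q x y dμ(x)) be the true entropy of the output Y, and for a sample vector v : Fin N → 𝒳 let Ĥ(v) = H(y ↦ (1/N) * ∑_i q (v i) y) be the empirical entropy estimate. Then for any natural number N ≥ 2 and any δ ∈ (0, 1), with probability at least 1 − δ over v drawn from the N-fold product measure μ^{⊗N}, one has |H(Y) − Ĥ(v)| ≤ (card 𝒴) * Real.log N * Real.sqrt (Real.log (2/δ)) / Real.sqrt (2 * N) + (card 𝒴 − 1) / N. -/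

import Mathlib

open MeasureTheory

lemma aux_negMulLog_add {a b : ℝ} (ha : 0 ≤ a) (hb : 0 ≤ b) :
    Real.negMulLog (a + b) ≤ Real.negMulLog a + Real.negMulLog b := by
  rcases ha.eq_or_lt with rfl | ha
  · simp
  rcases hb.eq_or_lt with rfl | hb
  · simp
  have h1 : Real.log a ≤ Real.log (a + b) := Real.log_le_log ha (by linarith)
  have h2 : Real.log b ≤ Real.log (a + b) := Real.log_le_log hb (by linarith)
  simp only [Real.negMulLog]
  nlinarith

lemma aux_negMulLog_le {p C : ℝ} (hp : 0 < p) (hC : 0 < C) :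
    Real.negMulLog p ≤ p * Real.log C + 1 / C - p := by
  have h := Real.log_le_sub_one_of_pos (show 0 < 1 / (p * C) by positivity)
  rw [one_div, Real.log_inv, Real.log_mul hp.ne' hC.ne'] at h
  have h2 := mul_le_mul_of_nonneg_left h hp.le
  have h3 : p * ((p * C)⁻¹ - 1) = 1 / C - p := by field_simp
  rw [h3] at h2
  simp only [Real.negMulLog]
  linarith

lemma aux_negMulLog_sub {R P D : ℝ} (hR : 0 ≤ R) (hRP : R ≤ P) (hP : P ≤ 1) (hD : 0 < D) :
    Real.negMulLog R - Real.negMulLog P ≤ P / D - R + R * Real.log D := by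
  rcases hR.eq_or_lt with rfl | hR
  · have := Real.negMulLog_nonneg hRP hP
    have : 0 ≤ P / D := by positivity
    simp; linarith
  have hP0 : 0 < P := by linarith
  have h := Real.log_le_sub_one_of_pos (show 0 < P / (R * D) by positivity)
  rw [Real.log_div hP0.ne' (by positivity), Real.log_mul hR.ne' hD.ne'] at h
  have h2 := mul_le_mul_of_nonneg_left h hR.le
  have h3 : R * (P / (R * D) - 1) = P / D - R := by field_simp
  rw [h3] at h2
  have h4 : Real.log P ≤ 0 := Real.log_nonpos hP0.le hP
  simp only [Real.negMulLog]
  nlinarith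

lemma aux_log_num (N K : ℕ) (hN : 2 ≤ N) (hK : 2 ≤ K) :
    Real.log ((K : ℝ) - 1) + ((N : ℝ) - 1) * Real.log ((N : ℝ) / (N - 1))
      ≤ ((K : ℝ) - 1) * Real.log N := by
  have hNr : (2 : ℝ) ≤ N := by exact_mod_cast hN
  obtain ⟨k, rfl⟩ := Nat.exists_eq_add_of_le hK
  have h1 : Real.log (((2 + k : ℕ) : ℝ) - 1) ≤ k * Real.log N := by
    rw [← Real.log_pow]
    apply Real.log_le_log
    · push_cast; linarith [(Nat.cast_nonneg k : (0 : ℝ) ≤ k)]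
    · have : k + 1 ≤ N ^ k := (Nat.lt_two_pow_self (n := k)).trans_le (Nat.pow_le_pow_left hN k)
      have : ((k + 1 : ℕ) : ℝ) ≤ ((N ^ k : ℕ) : ℝ) := by exact_mod_cast this
      push_cast at this ⊢
      linarith
  have h2 : ((N : ℝ) - 1) * Real.log ((N : ℝ) / (N - 1)) ≤ Real.log N := by
    rcases hN.eq_or_lt with rfl | hN3
    · norm_num
    · have hN3r : (3 : ℝ) ≤ N := by exact_mod_cast hN3
      have h := Real.log_le_sub_one_of_pos (show 0 < (N : ℝ) / (N - 1) from
        div_pos (by linarith) (by linarith))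
      have hpos : (0 : ℝ) < N - 1 := by linarith
      have h' := mul_le_mul_of_nonneg_left h hpos.le
      have h3 : ((N : ℝ) - 1) * ((N : ℝ) / (N - 1) - 1) = 1 := by field_simp; ring
      have h4 : 1 ≤ Real.log N := by
        rw [Real.le_log_iff_exp_le (by linarith)]
        linarith [Real.exp_one_lt_d9]
      linarith
  push_cast at h1 ⊢
  nlinarith

/-- Fannes-type continuity bound of the entropy in total variation. -/
lemma aux_fannes {𝒴 : Type*} [Fintype 𝒴] (P Q : 𝒴 → ℝ) (hP : ∀ y, 0 ≤ P y) (hQ : ∀ y, 0 ≤ Q y)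
    (hPs : ∑ y, P y = 1) (hQs : ∑ y, Q y = 1) (N : ℕ) (hN : 2 ≤ N)
    (hK : 2 ≤ Fintype.card 𝒴) (hs : ∑ y, (Q y - min (P y) (Q y)) ≤ 1 / N) :
    ∑ y, Real.negMulLog (Q y) - ∑ y, Real.negMulLog (P y)
      ≤ (Fintype.card 𝒴 : ℝ) * Real.log N / N := by
  classical
  set K := Fintype.card 𝒴 with hKdef
  have hNr : (2 : ℝ) ≤ N := by exact_mod_cast hN
  have hKr : (2 : ℝ) ≤ K := by exact_mod_cast hK
  have hN1 : (0 : ℝ) < N - 1 := by linarith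
  have hN0 : (0 : ℝ) < N := by linarith
  have hK1 : (0 : ℝ) < K - 1 := by linarith
  set s := ∑ y, (Q y - min (P y) (Q y)) with hsdef
  set C : ℝ := (K - 1) * N with hC
  set D : ℝ := N / (N - 1) with hD
  have hC0 : 0 < C := by positivity
  have hD0 : 0 < D := by positivity
  have hP1 : ∀ y, P y ≤ 1 := fun y => by
    rw [← hPs]; exact Finset.single_le_sum (fun i _ => hP i) (Finset.mem_univ y)
  have hpt : ∀ y, Real.negMulLog (Q y) - Real.negMulLog (P y) ≤
      ((Q y - min (P y) (Q y)) * Real.log C + (if P y < Q y then 1 / C else 0)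
        - (Q y - min (P y) (Q y))) + (P y / D - min (P y) (Q y) + min (P y) (Q y) * Real.log D) := by
    intro y
    have hR : 0 ≤ min (P y) (Q y) := le_min (hP y) (hQ y)
    have h2 := aux_negMulLog_sub hR (min_le_left _ _) (hP1 y) hD0
    have h1 := aux_negMulLog_add hR (show 0 ≤ Q y - min (P y) (Q y) by simp)
    rw [add_sub_cancel] at h1
    have h3 : Real.negMulLog (Q y - min (P y) (Q y)) ≤ (Q y - min (P y) (Q y)) * Real.log C
        + (if P y < Q y then 1 / C else 0) - (Q y - min (P y) (Q y)) := by
      split_ifs with h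
      · exact aux_negMulLog_le (by rw [min_eq_left h.le]; linarith) hC0
      · rw [min_eq_right (not_lt.1 h)]; simp
    linarith
  have hcount : ∑ y, (if P y < Q y then 1 / C else 0) ≤ 1 / (N : ℝ) := by
    rw [← Finset.sum_filter, Finset.sum_const, nsmul_eq_mul]
    have hex : ∃ y, Q y ≤ P y := by
      by_contra hcon
      push Not at hcon
      have hne : Nonempty 𝒴 := Fintype.card_pos_iff.1 (by omega)
      have := Finset.sum_lt_sum_of_nonempty (s := Finset.univ) Finset.univ_nonempty
        (fun y _ => hcon y)
      linarith
    obtain ⟨y0, hy0⟩ := hex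
    have hlt : (Finset.univ.filter fun y => P y < Q y).card < K := by
      rw [hKdef, ← Finset.card_univ]
      apply Finset.card_lt_card
      rw [Finset.ssubset_iff_of_subset (Finset.filter_subset _ _)]
      exact ⟨y0, Finset.mem_univ _, by simpa using hy0⟩
    have hlt' : ((Finset.univ.filter fun y => P y < Q y).card : ℝ) ≤ K - 1 := by
      have : ((Finset.univ.filter fun y => P y < Q y).card : ℝ) + 1 ≤ K := by exact_mod_cast hlt
      linarith
    calc _ ≤ ((K : ℝ) - 1) * (1 / C) := by gcongr
      _ = 1 / N := by rw [hC]; field_simp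
  have hRs : ∑ y, min (P y) (Q y) = 1 - s := by
    rw [hsdef, Finset.sum_sub_distrib, hQs]; ring
  have hsum := Finset.sum_le_sum (s := Finset.univ) fun y _ => hpt y
  simp only [Finset.sum_add_distrib, Finset.sum_sub_distrib, ← Finset.sum_mul, ← Finset.sum_div,
    hRs, hPs, hQs] at hsum
  have hnum := aux_log_num N K hN hK
  rw [← hD] at hnum
  have hlogC : Real.log C = Real.log (K - 1) + Real.log N := by
    rw [hC, Real.log_mul hK1.ne' hN0.ne']
  have hlogD : Real.log D = Real.log N - Real.log (N - 1) := by
    rw [hD, Real.log_div hN0.ne' hN1.ne']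
  have hD' : 1 / D = 1 - 1 / N := by rw [hD]; field_simp
  have hlK : 0 ≤ Real.log ((K : ℝ) - 1) := Real.log_nonneg (by linarith)
  have hlN : 0 ≤ Real.log ((N : ℝ) - 1) := Real.log_nonneg (by linarith)
  have hmul := mul_le_mul_of_nonneg_right hs (add_nonneg hlK hlN)
  have hfin : 1 / (N : ℝ) * (Real.log (K - 1) + Real.log (N - 1)) + Real.log D
      ≤ K * Real.log N / N := by
    rw [div_mul_eq_mul_div, one_mul, div_add' _ _ _ hN0.ne']
    apply div_le_div_of_nonneg_right _ hN0.le
    nlinarith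
  rw [hD', hlogC] at hsum
  have e : (1 - (1 - s)) * (Real.log (K - 1) + Real.log N) + (1 - s) * Real.log D
     = s * (Real.log (K - 1) + Real.log (N - 1)) + Real.log D := by
    rw [hlogD]; ring
  linarith

lemma aux_mcdiarmid {𝒳 : Type*} [MeasurableSpace 𝒳] (μ : Measure 𝒳) [IsProbabilityMeasure μ]
    (c : ℝ) (hc : 0 ≤ c) (t : ℝ) : ∀ (n : ℕ) (f : (Fin n → 𝒳) → ℝ), Measurable f →
    (∃ B, ∀ v, |f v| ≤ B) → (∀ v i x, |f (Function.update v i x) - f v| ≤ c) →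
    ∫ v, Real.exp (t * (f v - ∫ w, f w ∂(Measure.pi fun _ => μ))) ∂(Measure.pi fun _ => μ)
      ≤ Real.exp (n * (c / 2) ^ 2 * t ^ 2 / 2) := by
  intro n
  induction n with
  | zero =>
    intro f hf _ _
    have : ∀ v : Fin 0 → 𝒳, f v = f default := fun v => by congr; exact Subsingleton.elim _ _
    simp [this]
  | succ n ih =>
    intro f hf ⟨B, hB⟩ hd
    set ν : Measure (Fin n → 𝒳) := Measure.pi fun _ => μ with hν
    have hcons : Measurable fun z : 𝒳 × (Fin n → 𝒳) => (Fin.cons z.1 z.2 : Fin (n+1) → 𝒳) := by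
      rw [measurable_pi_iff]
      intro i
      refine Fin.cases ?_ (fun j => ?_) i
      · simpa using measurable_fst
      · simpa [Function.comp_def] using (measurable_pi_apply j).comp measurable_snd
    have hmp : MeasurePreserving (fun z : 𝒳 × (Fin n → 𝒳) => (Fin.cons z.1 z.2 : Fin (n+1) → 𝒳))
        (μ.prod ν) (Measure.pi fun _ => μ) := by
      have := (measurePreserving_piFinSuccAbove (fun _ : Fin (n+1) => μ) 0).symm
      convert this using 1
      ext z
      simp [MeasurableEquiv.piFinSuccAbove, Fin.insertNthEquiv]
    have hint : ∀ h : (Fin (n+1) → 𝒳) → ℝ, Measurable h →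
        ∫ v, h v ∂(Measure.pi fun _ => μ) = ∫ z, h (Fin.cons z.1 z.2) ∂(μ.prod ν) := by
      intro h hh
      rw [← hmp.map_eq, integral_map hcons.aemeasurable hh.aestronglyMeasurable]
    have hF : Measurable fun z : 𝒳 × (Fin n → 𝒳) => f (Fin.cons z.1 z.2) := hf.comp hcons
    have hFx : ∀ x, Measurable fun w : Fin n → 𝒳 => f (Fin.cons x w) := fun x =>
      hF.comp measurable_prodMk_left
    have hFxi : ∀ x, Integrable (fun w : Fin n → 𝒳 => f (Fin.cons x w)) ν := fun x =>
      Integrable.of_bound (hFx x).aestronglyMeasurable B (ae_of_all _ fun w => hB _)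
    set g : 𝒳 → ℝ := fun x => ∫ w, f (Fin.cons x w) ∂ν with hg
    have hgm : Measurable g := (hF.stronglyMeasurable.integral_prod_right).measurable
    have hgB : ∀ x, |g x| ≤ B := fun x => by
      have := norm_integral_le_of_norm_le_const (μ := ν)
        (f := fun w => f (Fin.cons x w)) (C := B) (ae_of_all _ fun w => hB _)
      simpa using this
    have hgd : ∀ x x', g x - g x' ≤ c := fun x x' => by
      rw [hg]; dsimp only
      rw [← integral_sub (hFxi x) (hFxi x')]
      have : ∫ w, (f (Fin.cons x w) - f (Fin.cons x' w)) ∂ν ≤ ∫ w, c ∂ν := by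
        apply integral_mono ((hFxi x).sub (hFxi x')) (integrable_const _)
        intro w
        have := hd (Fin.cons x' w) 0 x
        rw [Fin.update_cons_zero] at this
        exact (abs_le.1 this).2
      simpa using this
    have hEf : ∫ v, f v ∂(Measure.pi fun _ => μ) = ∫ x, g x ∂μ := by
      rw [hint f hf, integral_prod]
      exact Integrable.of_bound hF.aestronglyMeasurable B (ae_of_all _ fun w => hB _)
    obtain ⟨x0⟩ : Nonempty 𝒳 := nonempty_of_isProbabilityMeasure μ
    have hbdd : BddBelow (Set.range g) := ⟨-B, by rintro _ ⟨x, rfl⟩; exact (abs_le.1 (hgB x)).1⟩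
    have : Nonempty 𝒳 := ⟨x0⟩
    have hIcc : ∀ x, g x ∈ Set.Icc (⨅ x, g x) ((⨅ x, g x) + c) := fun x =>
      ⟨ciInf_le hbdd x, by
        have : g x - c ≤ ⨅ x, g x := le_ciInf fun x' => by linarith [hgd x x']
        linarith⟩
    have hH := (ProbabilityTheory.hasSubgaussianMGF_of_mem_Icc (μ := μ) hgm.aemeasurable
      (ae_of_all _ hIcc))
    have hHt := hH.mgf_le t
    rw [ProbabilityTheory.mgf] at hHt
    have hcc : ((((‖(⨅ x, g x) + c - ⨅ x, g x‖₊ / 2) ^ 2 : NNReal)) : ℝ) = (c / 2) ^ 2 := by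
      simp [abs_of_nonneg hc]
    rw [hcc] at hHt
    rw [hint _ (by fun_prop), hEf, integral_prod]
    · have hinner : ∀ x, ∫ w, Real.exp (t * (f (Fin.cons x w) - ∫ x, g x ∂μ)) ∂ν
          ≤ Real.exp (n * (c / 2) ^ 2 * t ^ 2 / 2) * Real.exp (t * (g x - ∫ x, g x ∂μ)) := by
        intro x
        have := ih (fun w => f (Fin.cons x w)) (hFx x) ⟨B, fun w => hB _⟩ (fun w i x' => by
          have := hd (Fin.cons x w) i.succ x'
          rwa [← Fin.cons_update] at this)
        calc _ = ∫ w, Real.exp (t * (f (Fin.cons x w) - g x)) * Real.exp (t * (g x - ∫ x, g x ∂μ)) ∂ν := by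
              congr with w
              rw [← Real.exp_add]; congr 1; ring
          _ = (∫ w, Real.exp (t * (f (Fin.cons x w) - g x)) ∂ν) * Real.exp (t * (g x - ∫ x, g x ∂μ)) :=
              integral_mul_const _ _
          _ ≤ _ := by gcongr
      calc _ ≤ ∫ x, Real.exp (n * (c / 2) ^ 2 * t ^ 2 / 2) * Real.exp (t * (g x - ∫ x, g x ∂μ)) ∂μ := by
            apply integral_mono_of_nonneg
            · exact ae_of_all _ fun x => integral_nonneg fun w => (Real.exp_pos _).le
            · exact (hH.integrable_exp_mul t).const_mul _
            · exact ae_of_all _ hinner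
        _ = Real.exp (n * (c / 2) ^ 2 * t ^ 2 / 2) * ∫ x, Real.exp (t * (g x - ∫ x, g x ∂μ)) ∂μ :=
            integral_const_mul _ _
        _ ≤ Real.exp (n * (c / 2) ^ 2 * t ^ 2 / 2) * Real.exp ((c / 2) ^ 2 * t ^ 2 / 2) := by
            gcongr
        _ = _ := by
            rw [← Real.exp_add]; congr 1; push_cast; ring
    · refine Integrable.of_bound
        ((hF.sub_const _).const_mul t).exp.aestronglyMeasurable
        (Real.exp (|t| * (B + |∫ x, g x ∂μ|)))
        (ae_of_all _ fun z => ?_)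
      rw [Real.norm_eq_abs, Real.abs_exp, Real.exp_le_exp]
      calc _ ≤ |t * (f (Fin.cons z.1 z.2) - ∫ x, g x ∂μ)| := le_abs_self _
        _ = |t| * |f (Fin.cons z.1 z.2) - ∫ x, g x ∂μ| := abs_mul _ _
        _ ≤ _ := by
          gcongr
          exact (abs_sub _ _).trans (by gcongr; exact hB _)

lemma aux_mcdiarmid_sub {𝒳 : Type*} [MeasurableSpace 𝒳] (μ : Measure 𝒳) [IsProbabilityMeasure μ]
    (c : ℝ) (hc : 0 ≤ c) (n : ℕ) (f : (Fin n → 𝒳) → ℝ) (hf : Measurable f)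
    (hB : ∃ B, ∀ v, |f v| ≤ B) (hd : ∀ v i x, |f (Function.update v i x) - f v| ≤ c) :
    ProbabilityTheory.HasSubgaussianMGF
      (fun v => f v - ∫ w, f w ∂(Measure.pi fun _ => μ)) (n * (c.toNNReal / 2) ^ 2)
      (Measure.pi fun _ => μ) where
  integrable_exp_mul t := by
    obtain ⟨B, hB⟩ := hB
    refine Integrable.of_bound (by fun_prop)
      (Real.exp (|t| * (B + |∫ w, f w ∂(Measure.pi fun _ => μ)|))) (ae_of_all _ fun z => ?_)
    rw [Real.norm_eq_abs, Real.abs_exp, Real.exp_le_exp]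
    calc _ ≤ |t * (f z - ∫ w, f w ∂(Measure.pi fun _ => μ))| := le_abs_self _
      _ = |t| * |f z - ∫ w, f w ∂(Measure.pi fun _ => μ)| := abs_mul _ _
      _ ≤ _ := by
        gcongr
        exact (abs_sub _ _).trans (by gcongr; exact hB _)
  mgf_le t := by
    have := aux_mcdiarmid μ c hc t n f hf hB hd
    simpa [ProbabilityTheory.mgf, hc] using this

lemma aux_mcdiarmid_tail {𝒳 : Type*} [MeasurableSpace 𝒳] (μ : Measure 𝒳) [IsProbabilityMeasure μ]
    (c : ℝ) (hc : 0 ≤ c) (n : ℕ) (f : (Fin n → 𝒳) → ℝ) (hf : Measurable f)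
    (hB : ∃ B, ∀ v, |f v| ≤ B) (hd : ∀ v i x, |f (Function.update v i x) - f v| ≤ c)
    (ε : ℝ) (hε : 0 ≤ ε) :
    (Measure.pi fun _ => μ).real {v | ε ≤ |f v - ∫ w, f w ∂(Measure.pi fun _ => μ)|}
      ≤ 2 * Real.exp (-ε ^ 2 / (2 * (n * (c / 2) ^ 2))) := by
  have h := aux_mcdiarmid_sub μ c hc n f hf hB hd
  have h1 := h.measure_ge_le hε
  have h2 := h.neg.measure_ge_le hε
  have e : (((n * (c.toNNReal / 2) ^ 2 : NNReal)) : ℝ) = n * (c / 2) ^ 2 := by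
    simp [hc]
  rw [e] at h1 h2
  have hsub : {v | ε ≤ |f v - ∫ w, f w ∂(Measure.pi fun _ => μ)|} ⊆
     {v | ε ≤ f v - ∫ w, f w ∂(Measure.pi fun _ => μ)} ∪
     {v | ε ≤ (-fun v => f v - ∫ w, f w ∂(Measure.pi fun _ => μ)) v} := by
    intro v hv
    simpa [le_abs] using hv
  calc _ ≤ _ := measureReal_mono hsub
    _ ≤ _ := measureReal_union_le _ _
    _ ≤ _ := by linarith

lemma aux_bias {𝒳 : Type*} [MeasurableSpace 𝒳] (μ : Measure 𝒳) [IsProbabilityMeasure μ]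
    (r : 𝒳 → ℝ) (hr : Measurable r) (h0 : ∀ x, 0 ≤ r x) (h1 : ∀ x, r x ≤ 1)
    (N : ℕ) (hN : 0 < N) :
    |Real.negMulLog (∫ x, r x ∂μ) -
      ∫ v, Real.negMulLog ((1 / (N : ℝ)) * ∑ i, r (v i)) ∂(Measure.pi fun _ : Fin N => μ)|
      ≤ (1 - ∫ x, r x ∂μ) / N := by
  have hNr : (0 : ℝ) < N := by exact_mod_cast hN
  set p := ∫ x, r x ∂μ with hp
  set ν := Measure.pi fun _ : Fin N => μ with hν
  set a : (Fin N → 𝒳) → ℝ := fun v => (1 / (N : ℝ)) * ∑ i, r (v i) with ha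
  have ham : Measurable a := by fun_prop
  have ha0 : ∀ v, 0 ≤ a v := fun v => by
    have := Finset.sum_nonneg (s := Finset.univ) fun i _ => h0 (v i)
    positivity
  have ha1 : ∀ v, a v ≤ 1 := fun v => by
    have : ∑ i, r (v i) ≤ ∑ i : Fin N, (1 : ℝ) := Finset.sum_le_sum fun i _ => h1 (v i)
    simp at this
    rw [ha]; dsimp only
    rw [one_div_mul_eq_div, div_le_one hNr]; exact this
  have hri : Integrable r μ := Integrable.of_bound hr.aestronglyMeasurable 1
    (ae_of_all _ fun x => by rw [Real.norm_eq_abs, abs_of_nonneg (h0 x)]; exact h1 x)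
  have hai : Integrable a ν := Integrable.of_bound ham.aestronglyMeasurable 1
    (ae_of_all _ fun x => by rw [Real.norm_eq_abs, abs_of_nonneg (ha0 x)]; exact ha1 x)
  have ha2i : Integrable (fun v => a v ^ 2) ν :=
    Integrable.of_bound (ham.pow_const 2).aestronglyMeasurable 1
    (ae_of_all _ fun x => by
      rw [Real.norm_eq_abs, abs_of_nonneg (by positivity)]; exact pow_le_one₀ (ha0 x) (ha1 x))
  have hphi : Integrable (fun v => Real.negMulLog (a v)) ν :=
    Integrable.of_bound (Real.continuous_negMulLog.measurable.comp ham).aestronglyMeasurable 1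
    (ae_of_all _ fun x => by
      rw [Real.norm_eq_abs, abs_of_nonneg (Real.negMulLog_nonneg (ha0 x) (ha1 x))]
      linarith [Real.negMulLog_le_one_sub_self (ha0 x), ha0 x])
  have hEa : ∫ v, a v ∂ν = p := by
    rw [ha, integral_const_mul, integral_finsetSum]
    · have : ∀ i : Fin N, ∫ v, r (v i) ∂ν = p := fun i => by
        have h := measurePreserving_eval (fun _ : Fin N => μ) i
        rw [hp, ← h.map_eq, integral_map h.measurable.aemeasurable hr.aestronglyMeasurable]
      simp only [this]
      simp [hNr.ne']
    · intro i _
      exact (measurePreserving_eval (fun _ : Fin N => μ) i).integrable_comp_of_integrable hri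
  have hp0 : 0 ≤ p := integral_nonneg h0
  have hp1 : p ≤ 1 := by
    have := integral_mono hri (integrable_const (1 : ℝ)) h1
    simpa using this
  have hVar : ∫ v, a v ^ 2 ∂ν - p ^ 2 ≤ (1 - p) * p / N := by
    have hL : MemLp r 2 μ := MemLp.of_bound hr.aestronglyMeasurable 1
      (ae_of_all _ fun x => by rw [Real.norm_eq_abs, abs_of_nonneg (h0 x)]; exact h1 x)
    have haL : MemLp a 2 ν := MemLp.of_bound ham.aestronglyMeasurable 1
      (ae_of_all _ fun x => by rw [Real.norm_eq_abs, abs_of_nonneg (ha0 x)]; exact ha1 x)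
    have e1 := ProbabilityTheory.variance_eq_sub haL
    rw [hEa] at e1
    have e2 := ProbabilityTheory.variance_sum_pi (μ := fun _ : Fin N => μ) (X := fun _ => r)
      (fun _ => hL)
    have e3 := ProbabilityTheory.variance_const_mul (1 / (N : ℝ))
      (∑ i : Fin N, fun ω : Fin N → 𝒳 => r (ω i)) ν
    rw [e2] at e3
    have e4 : (fun ω => 1 / (N : ℝ) * (∑ i : Fin N, fun ω : Fin N → 𝒳 => r (ω i)) ω) = a := by
      ext v; simp [ha]
    rw [e4] at e3
    have e5 := ProbabilityTheory.variance_le_sub_mul_sub (μ := μ) (X := r) (a := 0) (b := 1)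
      (ae_of_all _ fun x => ⟨h0 x, h1 x⟩) hr.aemeasurable
    rw [← hp, sub_zero] at e5
    have e6 : ∫ v, a v ^ 2 ∂ν - p ^ 2 = (1 / (N : ℝ)) ^ 2 * (N * ProbabilityTheory.variance r μ) := by
      rw [e3] at e1
      simp at e1 ⊢
      exact e1.symm
    rw [e6]
    calc _ ≤ (1 / (N : ℝ)) ^ 2 * (N * ((1 - p) * p)) := by gcongr
      _ = _ := by field_simp
  rcases hp0.eq_or_lt with hpz | hpp
  · have hae : a =ᵐ[ν] 0 := by
      rw [← integral_eq_zero_iff_of_nonneg ha0 hai, hEa, ← hpz]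
    have : ∫ v, Real.negMulLog (a v) ∂ν = 0 := by
      apply integral_eq_zero_of_ae
      filter_upwards [hae] with v hv
      simp [hv]
    rw [this, ← hpz]
    simp
  · have hmid : Integrable (fun v => -Real.negMulLog (a v) - a v * Real.log p) ν :=
      hphi.neg.sub (hai.mul_const _)
    have hEm : ∫ v, (-Real.negMulLog (a v) - a v * Real.log p) ∂ν
        = Real.negMulLog p - ∫ v, Real.negMulLog (a v) ∂ν := by
      have hneg : Integrable (fun v => -Real.negMulLog (a v)) ν := hphi.neg
      rw [integral_sub hneg (hai.mul_const _), integral_neg, integral_mul_const, hEa]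
      simp only [Real.negMulLog]; ring
    have hlow : ∫ v, (a v - p) ∂ν ≤ ∫ v, (-Real.negMulLog (a v) - a v * Real.log p) ∂ν := by
      apply integral_mono (hai.sub (integrable_const _)) hmid
      intro v
      show a v - p ≤ -Real.negMulLog (a v) - a v * Real.log p
      rcases (ha0 v).eq_or_lt with hz | hz
      · rw [← hz, Real.negMulLog_zero]; linarith
      · have h := Real.log_le_sub_one_of_pos (div_pos hpp hz)
        rw [Real.log_div hpp.ne' hz.ne'] at h
        have h2 := mul_le_mul_of_nonneg_left h hz.le
        have h3 : a v * (p / a v - 1) = p - a v := by field_simp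
        rw [h3] at h2
        simp only [Real.negMulLog]
        linarith
    have hup : ∫ v, (-Real.negMulLog (a v) - a v * Real.log p) ∂ν ≤ ∫ v, (a v ^ 2 / p - a v) ∂ν := by
      apply integral_mono hmid ((ha2i.div_const _).sub hai)
      intro v
      show -Real.negMulLog (a v) - a v * Real.log p ≤ a v ^ 2 / p - a v
      rcases (ha0 v).eq_or_lt with hz | hz
      · rw [← hz]; simp
      · have h := Real.log_le_sub_one_of_pos (div_pos hz hpp)
        rw [Real.log_div hz.ne' hpp.ne'] at h
        have h2 := mul_le_mul_of_nonneg_left h hz.le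
        have h3 : a v * (a v / p - 1) = a v ^ 2 / p - a v := by ring
        rw [h3] at h2
        simp only [Real.negMulLog]
        linarith
    rw [hEm] at hlow hup
    rw [integral_sub hai (integrable_const _), hEa] at hlow
    rw [integral_sub (ha2i.div_const _) hai, hEa, integral_div] at hup
    simp at hlow
    have : (∫ v, a v ^ 2 ∂ν) / p - p ≤ (1 - p) / N := by
      have h := div_le_div_of_nonneg_right hVar hpp.le
      have e1 : (∫ v, a v ^ 2 ∂ν - p ^ 2) / p = (∫ v, a v ^ 2 ∂ν) / p - p := by field_simp
      have e2 : (1 - p) * p / N / p = (1 - p) / N := by field_simp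
      rwa [e1, e2] at h
    rw [abs_of_nonneg (by linarith)]
    linarith

lemma aux_entropy_bdd {𝒳 : Type*}
    {𝒴 : Type*} [Fintype 𝒴] (q : 𝒳 → 𝒴 → ℝ)
    (hq : ∀ x y, 0 ≤ q x y) (hqsum : ∀ x, ∑ y, q x y = 1)
    (N : ℕ) (hN : 2 ≤ N) (hK : 2 ≤ Fintype.card 𝒴) (v w : Fin N → 𝒳) (i : Fin N)
    (hvw : ∀ j, j ≠ i → v j = w j) :
    ∑ y, Real.negMulLog ((1 / (N : ℝ)) * ∑ i, q (v i) y) -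
      ∑ y, Real.negMulLog ((1 / (N : ℝ)) * ∑ i, q (w i) y)
      ≤ (Fintype.card 𝒴 : ℝ) * Real.log N / N := by
  have hNr : (0 : ℝ) < N := by positivity
  have hnn : ∀ (v : Fin N → 𝒳) y, 0 ≤ (1 / (N : ℝ)) * ∑ i, q (v i) y := fun v y => by
    have := Finset.sum_nonneg (s := Finset.univ) fun i _ => hq (v i) y
    positivity
  have hs1 : ∀ (v : Fin N → 𝒳), ∑ y, (1 / (N : ℝ)) * ∑ i, q (v i) y = 1 := fun v => by
    rw [← Finset.mul_sum, Finset.sum_comm]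
    simp [hqsum]; field_simp
  apply aux_fannes _ _ (hnn w) (hnn v) (hs1 w) (hs1 v) N hN hK
  calc _ ≤ ∑ y, (1 / (N : ℝ)) * q (v i) y := by
        apply Finset.sum_le_sum
        intro y _
        rw [sub_le_iff_le_add, ← sub_le_iff_le_add']
        have e : ∀ v : Fin N → 𝒳, ∑ i, q (v i) y = q (v i) y + ∑ j ∈ Finset.univ.erase i, q (v j) y :=
          fun v => (Finset.add_sum_erase _ (fun j => q (v j) y) (Finset.mem_univ i)).symm
        have e2 : ∑ j ∈ Finset.univ.erase i, q (v j) y = ∑ j ∈ Finset.univ.erase i, q (w j) y :=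
          Finset.sum_congr rfl fun j hj => by rw [hvw j (Finset.ne_of_mem_erase hj)]
        have p1 : 0 ≤ (1 / (N : ℝ)) * q (v i) y := by have := hq (v i) y; positivity
        have p2 : 0 ≤ (1 / (N : ℝ)) * q (w i) y := by have := hq (w i) y; positivity
        apply le_min
        · rw [e v, e w, e2, mul_add, mul_add]; linarith
        · linarith
    _ = 1 / N := by rw [← Finset.mul_sum, hqsum, mul_one]

/-- **Proposition 3 of the paper.** Let `Y` be a fixed probabilistic function of
`X` given by the known channel `q = p_{Y|X}`, let `H(Y)` be the entropy of the
output pmf `y ↦ ∫ q x y dμ(x)`, and let `Ĥ(v) = H(y ↦ (1/N) ∑ i, q (v i) y)` be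
the empirical entropy estimate from a sample `v` of size `N ≥ 2`. Then for any
`δ ∈ (0, 1)`, with probability at least `1 - δ` over `v ∼ μ^{⊗N}`,
`|H(Y) - Ĥ(v)| ≤ card 𝒴 * log N * √(log (2/δ)) / √(2N) + (card 𝒴 - 1)/N`. -/
theorem empirical_entropy_close_to_true_entropy
    {𝒳 : Type*} [MeasurableSpace 𝒳] (μ : Measure 𝒳) [IsProbabilityMeasure μ]
    {𝒴 : Type*} [Fintype 𝒴]
    (q : 𝒳 → 𝒴 → ℝ)
    (hq : ∀ x y, 0 ≤ q x y) (hqsum : ∀ x, ∑ y, q x y = 1)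
    (hqm : ∀ y, Measurable fun x => q x y)
    (N : ℕ) (hN : 2 ≤ N)
    (HY : ℝ)
    (hHY : HY = ∑ y, -(∫ x, q x y ∂μ) * Real.log (∫ x, q x y ∂μ))
    (Hhat : (Fin N → 𝒳) → ℝ)
    (hHhat : ∀ v, Hhat v =
      ∑ y, -((1 / (N : ℝ)) * ∑ i, q (v i) y) *
        Real.log ((1 / (N : ℝ)) * ∑ i, q (v i) y))
    (δ : ℝ) (hδ : δ ∈ Set.Ioo (0 : ℝ) 1) :
    ENNReal.ofReal (1 - δ) ≤
      (Measure.pi fun _ : Fin N => μ)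
        {v | |HY - Hhat v| ≤
          (Fintype.card 𝒴 : ℝ) * Real.log N * Real.sqrt (Real.log (2 / δ)) /
              Real.sqrt (2 * N) +
            ((Fintype.card 𝒴 : ℝ) - 1) / N} := by
  obtain ⟨x0⟩ : Nonempty 𝒳 := nonempty_of_isProbabilityMeasure μ
  have hNr : (0 : ℝ) < N := by positivity
  set ν := Measure.pi fun _ : Fin N => μ with hν
  have hq1 : ∀ x y, q x y ≤ 1 := fun x y => by
    rw [← hqsum x]; exact Finset.single_le_sum (fun i _ => hq x i) (Finset.mem_univ y)
  have hH1 : HY = ∑ y, Real.negMulLog (∫ x, q x y ∂μ) := hHY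
  have hH2 : Hhat = fun v => ∑ y, Real.negMulLog ((1 / (N : ℝ)) * ∑ i, q (v i) y) := by
    ext v; exact hHhat v
  have hqi : ∀ y, Integrable (fun x => q x y) μ := fun y =>
    Integrable.of_bound (hqm y).aestronglyMeasurable 1
      (ae_of_all _ fun x => by rw [Real.norm_eq_abs, abs_of_nonneg (hq x y)]; exact hq1 x y)
  have hps : ∑ y, ∫ x, q x y ∂μ = 1 := by
    rw [← integral_finsetSum _ fun y _ => hqi y]
    simp [hqsum]
  have ham : ∀ y, Measurable fun v : Fin N → 𝒳 => (1 / (N : ℝ)) * ∑ i, q (v i) y := fun y =>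
    (Finset.measurable_sum _ fun i _ => (hqm y).comp (measurable_pi_apply i)).const_mul _
  have hphim : ∀ y, Measurable fun v : Fin N → 𝒳 =>
      Real.negMulLog ((1 / (N : ℝ)) * ∑ i, q (v i) y) := fun y =>
    Real.continuous_negMulLog.measurable.comp (ham y)
  have hm : Measurable Hhat := by
    rw [hH2]; exact Finset.measurable_sum _ fun y _ => hphim y
  have hphib : ∀ y (v : Fin N → 𝒳), |Real.negMulLog ((1 / (N : ℝ)) * ∑ i, q (v i) y)| ≤ 1 := by
    intro y v
    have a0 : 0 ≤ (1 / (N : ℝ)) * ∑ i, q (v i) y := by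
      have := Finset.sum_nonneg (s := Finset.univ) fun i _ => hq (v i) y
      positivity
    have a1 : (1 / (N : ℝ)) * ∑ i, q (v i) y ≤ 1 := by
      have : ∑ i, q (v i) y ≤ ∑ i : Fin N, (1 : ℝ) := Finset.sum_le_sum fun i _ => hq1 (v i) y
      simp at this
      rw [one_div_mul_eq_div, div_le_one hNr]; exact this
    rw [abs_of_nonneg (Real.negMulLog_nonneg a0 a1)]
    linarith [Real.negMulLog_le_one_sub_self a0]
  have hbias : |HY - ∫ v, Hhat v ∂ν| ≤ ((Fintype.card 𝒴 : ℝ) - 1) / N := by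
    rw [hH1, hH2]
    rw [integral_finsetSum _ fun y _ => Integrable.of_bound (hphim y).aestronglyMeasurable 1
      (ae_of_all _ fun v => hphib y v), ← Finset.sum_sub_distrib]
    calc _ ≤ _ := Finset.abs_sum_le_sum_abs _ _
      _ ≤ ∑ y, (1 - ∫ x, q x y ∂μ) / N := Finset.sum_le_sum fun y _ =>
          aux_bias μ (fun x => q x y) (hqm y) (fun x => hq x y) (fun x => hq1 x y) N (by omega)
      _ = _ := by rw [← Finset.sum_div, Finset.sum_sub_distrib, hps]; simp
  set K := Fintype.card 𝒴 with hKdef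
  have hlogN : 0 < Real.log N := Real.log_pos (by exact_mod_cast hN)
  have hKpos : 0 < K := by
    rcases Nat.eq_zero_or_pos K with h | h
    · have : IsEmpty 𝒴 := Fintype.card_eq_zero_iff.1 h
      have := hqsum x0
      simp at this
    · exact h
  have hKr : (0 : ℝ) < K := by exact_mod_cast hKpos
  have hdiff : ∀ v w : Fin N → 𝒳, ∀ i, (∀ j, j ≠ i → v j = w j) →
      Hhat v - Hhat w ≤ K * Real.log N / N := by
    intro v w i hvw
    rcases Nat.lt_or_ge K 2 with h | h
    · have hK1 : K = 1 := by omega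
      obtain ⟨y0, hy0⟩ := Fintype.card_eq_one_iff.1 hK1
      have hqq : ∀ x y, q x y = 1 := fun x y => by
        have : Unique 𝒴 := ⟨⟨y0⟩, hy0⟩
        rw [← hqsum x, Fintype.sum_unique]
        congr 1
        exact Subsingleton.elim _ _
      simp only [hH2, hqq, sub_self]
      positivity
    · rw [hH2]
      exact aux_entropy_bdd q hq hqsum N hN h v w i hvw
  have hδ0 := hδ.1
  have hδ1 := hδ.2
  have hlog : 0 < Real.log (2 / δ) := Real.log_pos (by rw [lt_div_iff₀ hδ0]; linarith)
  set ε : ℝ := K * Real.log N * Real.sqrt (Real.log (2 / δ)) / Real.sqrt (2 * N) with hε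
  have htail := aux_mcdiarmid_tail μ (K * Real.log N / N) (by positivity) N Hhat hm
    ⟨K, fun v => by
      rw [hH2]
      calc _ ≤ _ := Finset.abs_sum_le_sum_abs _ _
        _ ≤ ∑ y : 𝒴, (1 : ℝ) := Finset.sum_le_sum fun y _ => hphib y v
        _ = _ := by simp [hKdef]⟩
    (fun v i x => by
      rw [abs_le]
      constructor
      · have := hdiff v (Function.update v i x) i
          (fun j hj => by rw [Function.update_of_ne hj])
        linarith
      · exact hdiff _ _ i (fun j hj => by rw [Function.update_of_ne hj]))
    ε (by positivity)
  have hexp : 2 * Real.exp (-ε ^ 2 / (2 * (N * (K * Real.log N / N / 2) ^ 2))) = δ := by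
    have e1 : ε ^ 2 = K ^ 2 * Real.log N ^ 2 * Real.log (2 / δ) / (2 * N) := by
      rw [hε, div_pow, mul_pow, mul_pow, Real.sq_sqrt hlog.le, Real.sq_sqrt (by positivity)]
    have e2 : -ε ^ 2 / (2 * (N * (K * Real.log N / N / 2) ^ 2)) = - Real.log (2 / δ) := by
      rw [e1]; field_simp
    rw [e2, Real.exp_neg, Real.exp_log (by positivity)]
    field_simp
  rw [hexp] at htail
  set S := {v | ε ≤ |Hhat v - ∫ w, Hhat w ∂ν|} with hS
  have hSm : MeasurableSet S := measurableSet_le measurable_const (by fun_prop)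
  have hsub : Sᶜ ⊆ {v | |HY - Hhat v| ≤ ε + ((K : ℝ) - 1) / N} := by
    intro v hv
    simp only [hS, Set.mem_compl_iff, Set.mem_ofPred_eq, not_le] at hv ⊢
    have := abs_sub_le HY (∫ w, Hhat w ∂ν) (Hhat v)
    rw [abs_sub_comm (∫ w, Hhat w ∂ν)] at this
    linarith
  refine le_trans ?_ (measure_mono hsub)
  rw [← ofReal_measureReal, probReal_compl_eq_one_sub hSm]
  apply ENNReal.ofReal_le_ofReal
  linarith
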